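/- A bipartite graph G has Ferrers dimension at most 3 (i.e., G is the intersection of three chain graphs) if and only if G admits a biadjacency matrix (i.e., orderings of its two vertex sides) that contains neither the pattern Γ = [[*,1,*],[1,0,1],[0,1,*]] nor the pattern Δ = [[1,*,*],[0,1,*],[1,0,1]] as a submatrix. -/

import Mathlib

/-- A bipartite graph (given by its biadjacency relation) is a chain graph:
neighborhoods of one side are totally ordered by inclusion. -/
def ChainGraph {m n : ℕ} (G : Fin m → Fin n → Bool) : Prop :=
  ∀ u u' : Fin m, (∀ v, G u v = true → G u' v = true) ∨ (∀ v, G u' v = true → G u v = true)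

/-- M contains the pattern Γ = [[*,1,*],[1,0,1],[0,1,*]]. -/
def ContainsGamma {m n : ℕ} (M : Fin m → Fin n → Bool) : Prop :=
  ∃ (i1 i2 i3 : Fin m) (j1 j2 j3 : Fin n),
    i1 < i2 ∧ i2 < i3 ∧ j1 < j2 ∧ j2 < j3 ∧
    M i1 j2 = true ∧ M i2 j1 = true ∧ M i2 j2 = false ∧ M i2 j3 = true ∧
    M i3 j1 = false ∧ M i3 j2 = true

/-- M contains the pattern Δ = [[1,*,*],[0,1,*],[1,0,1]]. -/
def ContainsDelta {m n : ℕ} (M : Fin m → Fin n → Bool) : Prop :=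
  ∃ (i1 i2 i3 : Fin m) (j1 j2 j3 : Fin n),
    i1 < i2 ∧ i2 < i3 ∧ j1 < j2 ∧ j2 < j3 ∧
    M i1 j1 = true ∧ M i2 j1 = false ∧ M i2 j2 = true ∧
    M i3 j1 = true ∧ M i3 j2 = false ∧ M i3 j3 = true

/-!
Call a zero of a matrix *guarded* if it has a one above it and a one to its right. A `Γ` or a `Δ`
amounts to two guarded zeros spanning a rectangle whose other two corners are ones.

If `E = F₁ ⊓ F₂ ⊓ F₃` with all `Fₖ` Ferrers, order the columns along `F₁` and the rows along `F₂`.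
Then `F₁` and `F₂` hold at every guarded zero of `E`, so all guarded zeros are zeros of `F₃`, and
a Ferrers relation has no two zeros in such a position. Conversely, filling `E` up to the left and
downwards gives two Ferrers relations that exceed `E`, jointly, exactly at the guarded zeros. A
third one removes these as soon as they lie on no alternating cycle, and it suffices to exclude
alternating cycles of length two: walk backwards along a cycle, always to the leftmost
predecessor; a step to the right can only be followed by another step to the right, so the walk
never returns.
-/

variable {α β : Type*}

section Acyclic

variable {γ : Type*} {R : γ → γ → Prop}

theorem exists_linearOrder_of_acyclic (hR : ∀ a, ¬ Relation.TransGen R a a) :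
    ∃ _ : LinearOrder γ, ∀ a b, R a b → a < b := by
  have : IsStrictOrder γ (Relation.TransGen R) := { irrefl := hR }
  let _ : PartialOrder γ := partialOrderOfSO (Relation.TransGen R)
  refine ⟨(inferInstance : LinearOrder (LinearExtension γ)), fun a b hab ↦ ?_⟩
  have hlt : a < b := Relation.TransGen.single hab
  exact lt_of_le_of_ne (toLinearExtension.monotone hlt.le) hlt.ne

theorem exists_linearOrder_monotone {δ : Type*} [Preorder δ] {f : γ → δ}
    (hf : ∀ a b, f a ≤ f b ∨ f b ≤ f a) : ∃ _ : LinearOrder γ, Monotone f := by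
  have acyclic : ∀ a, ¬ Relation.TransGen (fun a b ↦ f a < f b) a a := fun a h ↦ by
    have : IsTrans γ (fun a b ↦ f a < f b) := ⟨fun _ _ _ ↦ lt_trans⟩
    rw [Relation.transGen_eq_self] at h
    exact lt_irrefl _ h
  obtain ⟨_, hlt⟩ := exists_linearOrder_of_acyclic acyclic
  refine ⟨‹_›, fun a b hab ↦ by_contra fun hnot ↦ ?_⟩
  exact hab.not_gt (hlt b a (((hf a b).resolve_left hnot).lt_of_not_ge hnot))

theorem exists_finite_forall_exists_rel_of_transGen {a b : γ} (h : Relation.TransGen R a b) :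
    ∃ S : Set γ, S.Finite ∧ b ∈ S ∧ ∀ y ∈ S, ∃ x ∈ insert a S, R x y := by
  induction h with
  | @single b hab => exact ⟨{b}, Set.finite_singleton b, rfl, by simp [hab]⟩
  | @tail b c _ hbc ih =>
    obtain ⟨S, hfin, hb, hpred⟩ := ih
    refine ⟨insert c S, hfin.insert c, Set.mem_insert c S, ?_⟩
    have hsub : insert a S ⊆ insert a (insert c S) :=
      Set.insert_subset_insert (Set.subset_insert c S)
    rintro y (rfl | hy)
    · exact ⟨b, hsub (Or.inr hb), hbc⟩
    · obtain ⟨x, hx, hxy⟩ := hpred y hy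
      exact ⟨x, hsub hx, hxy⟩

end Acyclic

section Ferrers

/-- A Ferrers relation: its rows are nested. These are the edge relations of chain graphs between
vertex sets of arbitrary size. -/
def IsFerrers (F : α → β → Prop) : Prop :=
  ∀ a a', F a ≤ F a' ∨ F a' ≤ F a

/-- No two entries of `Z` form an alternating cycle of length two, that is, span a rectangle whose
other two corners are ones of `E`. The case `c = d` says that `Z` consists of zeros of `E`. -/
def CrossingFree (E : α → β → Prop) (Z : Set (α × β)) : Prop :=
  ∀ c ∈ Z, ∀ d ∈ Z, E c.1 d.2 → ¬ E d.1 c.2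

/-- A step of an alternating walk: from an entry `c` of `Z` along its row to a one of `E`, and from
there along the column to an entry `d` of `Z`. The cycles of this relation are the obstructions to
separating `Z` from `E` by a Ferrers relation. -/
def AltStep (E : α → β → Prop) (Z : Set (α × β)) (c d : α × β) : Prop :=
  c ∈ Z ∧ d ∈ Z ∧ E c.1 d.2

variable {E F : α → β → Prop} {Z : Set (α × β)}

theorem IsFerrers.flip (hF : IsFerrers F) : IsFerrers (flip F) := by
  intro b b'
  by_contra! h
  simp only [Pi.le_def, le_Prop_eq, not_forall] at h
  obtain ⟨⟨a, hab, hab'⟩, a', ha'b', ha'b⟩ := h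
  exact (hF a a').elim (fun h ↦ ha'b (h b hab)) (fun h ↦ hab' (h b' ha'b'))

theorem IsFerrers.of_monotone [LinearOrder α] (hF : Monotone F) : IsFerrers F :=
  fun a a' ↦ (le_total a a').imp (@hF a a') (@hF a' a)

theorem IsFerrers.of_antitone [LinearOrder α] (hF : Antitone F) : IsFerrers F :=
  fun a a' ↦ (le_total a' a).imp (@hF a' a) (@hF a a')

theorem IsFerrers.crossingFree (hF : IsFerrers F) (hEF : E ≤ F) (hZ : ∀ c ∈ Z, ¬ F c.1 c.2) :
    CrossingFree E Z := fun c hc d hd hcd hdc ↦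
  (hF c.1 d.1).elim (fun h ↦ hZ d hd (h _ (hEF _ _ hcd))) (fun h ↦ hZ c hc (h _ (hEF _ _ hdc)))

theorem exists_isFerrers_of_acyclic (h : ∀ c, ¬ Relation.TransGen (AltStep E Z) c c) :
    ∃ F, IsFerrers F ∧ E ≤ F ∧ ∀ c ∈ Z, ¬ F c.1 c.2 := by
  obtain ⟨_, hlt⟩ := exists_linearOrder_of_acyclic h
  -- All of row `a` of `Z` has to precede all of its column `b`.
  refine ⟨fun a b ↦ ∀ b' a', (a, b') ∈ Z → (a', b) ∈ Z → (a, b') < (a', b), fun a a' ↦ ?_, ?_, ?_⟩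
  · refine or_iff_not_imp_left.2 fun hnot ↦ ?_
    simp only [Pi.le_def, le_Prop_eq, not_forall, not_lt] at hnot
    obtain ⟨b, hab, d, c, hd, hc, hle⟩ := hnot
    exact fun b' ha'b' e f he hf ↦ (hab e c he hc).trans_le (hle.trans (ha'b' d f hd hf).le)
  · exact fun a b hab b' a' hc hd ↦ hlt _ _ ⟨hc, hd, hab⟩
  · exact fun c hc hF ↦ lt_irrefl c (hF c.2 c.1 hc hc)

end Ferrers

section Patterns

/-- The matrix `M`, with rows and columns indexed by ordered sets, contains
`Γ = [[*,1,*],[1,0,1],[0,1,*]]`. -/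
def HasGamma [LT α] [LT β] (M : α → β → Prop) : Prop :=
  ∃ i₁ i₂ i₃ : α, ∃ j₁ j₂ j₃ : β, i₁ < i₂ ∧ i₂ < i₃ ∧ j₁ < j₂ ∧ j₂ < j₃ ∧
    M i₁ j₂ ∧ M i₂ j₁ ∧ ¬ M i₂ j₂ ∧ M i₂ j₃ ∧ ¬ M i₃ j₁ ∧ M i₃ j₂

/-- The matrix `M`, with rows and columns indexed by ordered sets, contains
`Δ = [[1,*,*],[0,1,*],[1,0,1]]`. -/
def HasDelta [LT α] [LT β] (M : α → β → Prop) : Prop :=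
  ∃ i₁ i₂ i₃ : α, ∃ j₁ j₂ j₃ : β, i₁ < i₂ ∧ i₂ < i₃ ∧ j₁ < j₂ ∧ j₂ < j₃ ∧
    M i₁ j₁ ∧ ¬ M i₂ j₁ ∧ M i₂ j₂ ∧ M i₃ j₁ ∧ ¬ M i₃ j₂ ∧ M i₃ j₃

theorem HasGamma.of_comp_strictMono {α' β' : Type*} [Preorder α] [Preorder β] [Preorder α']
    [Preorder β'] {M : α → β → Prop} {f : α' → α} {g : β' → β} (hf : StrictMono f)
    (hg : StrictMono g) (h : HasGamma fun i j ↦ M (f i) (g j)) : HasGamma M := by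
  obtain ⟨i₁, i₂, i₃, j₁, j₂, j₃, hi₁, hi₂, hj₁, hj₂, hM⟩ := h
  exact ⟨_, _, _, _, _, _, hf hi₁, hf hi₂, hg hj₁, hg hj₂, hM⟩

theorem HasDelta.of_comp_strictMono {α' β' : Type*} [Preorder α] [Preorder β] [Preorder α']
    [Preorder β'] {M : α → β → Prop} {f : α' → α} {g : β' → β} (hf : StrictMono f)
    (hg : StrictMono g) (h : HasDelta fun i j ↦ M (f i) (g j)) : HasDelta M := by
  obtain ⟨i₁, i₂, i₃, j₁, j₂, j₃, hi₁, hi₂, hj₁, hj₂, hM⟩ := h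
  exact ⟨_, _, _, _, _, _, hf hi₁, hf hi₂, hg hj₁, hg hj₂, hM⟩

/-- The zeros of `M` with a one above them and a one to their right. -/
def guardedZeros [LT α] [LT β] (M : α → β → Prop) : Set (α × β) :=
  {c | ¬ M c.1 c.2 ∧ (∃ i < c.1, M i c.2) ∧ ∃ j > c.2, M c.1 j}

variable [LinearOrder α] [LinearOrder β] {M : α → β → Prop}

theorem crossingFree_guardedZeros_iff :
    CrossingFree M (guardedZeros M) ↔ ¬ HasGamma M ∧ ¬ HasDelta M := by
  refine ⟨fun h ↦ ⟨?_, ?_⟩, fun ⟨hΓ, hΔ⟩ ↦ ?_⟩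
  · rintro ⟨i₁, i₂, i₃, j₁, j₂, j₃, hi₁, hi₂, hj₁, hj₂, m₁₂, m₂₁, m₂₂, m₂₃, m₃₁, m₃₂⟩
    exact h (i₂, j₂) ⟨m₂₂, ⟨i₁, hi₁, m₁₂⟩, j₃, hj₂, m₂₃⟩
      (i₃, j₁) ⟨m₃₁, ⟨i₂, hi₂, m₂₁⟩, j₂, hj₁, m₃₂⟩ m₂₁ m₃₂
  · rintro ⟨i₁, i₂, i₃, j₁, j₂, j₃, hi₁, hi₂, hj₁, hj₂, m₁₁, m₂₁, m₂₂, m₃₁, m₃₂, m₃₃⟩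
    exact h (i₂, j₁) ⟨m₂₁, ⟨i₁, hi₁, m₁₁⟩, j₂, hj₁, m₂₂⟩
      (i₃, j₂) ⟨m₃₂, ⟨i₂, hi₂, m₂₂⟩, j₃, hj₂, m₃₃⟩ m₂₂ m₃₁
  · rintro ⟨p, q⟩ hc ⟨p', q'⟩ hd hcd hdc
    wlog hp : p < p' generalizing p q p' q'
    · refine this p' q' hd p q hc hdc hcd (lt_of_le_of_ne (not_lt.1 hp) ?_)
      rintro rfl
      exact hc.1 hdc
    obtain ⟨hz, ⟨i, hi, hiq⟩, j, hj, hpj⟩ := hc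
    obtain ⟨hz', -, j', hj', hpj'⟩ := hd
    rcases lt_trichotomy q q' with hq | rfl | hq
    · exact hΔ ⟨i, p, p', q, q', j', hi, hp, hq, hj', hiq, hz, hcd, hdc, hz', hpj'⟩
    · exact hz hcd
    · exact hΓ ⟨i, p, p', q', q, j, hi, hp, hq, hj, hiq, hcd, hz, hpj, hz', hdc⟩

/-- The competitors of `t` as leftmost predecessor of `a` that matter are `c` and the fourth corner
`(t.1, c.2)` of the rectangle spanned by `t` and `c`. -/
theorem CrossingFree.lt_snd_of_leftmost (hM : CrossingFree M (guardedZeros M)) {a t c : α × β}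
    (ht : t ∈ guardedZeros M) (hc : c ∈ guardedZeros M) (hta : M t.1 a.2) (hct : M c.1 t.2)
    (hat : a.2 < t.2) (hleft : M c.1 a.2 → t.2 ≤ c.2)
    (hleft' : (t.1, c.2) ∈ guardedZeros M → t.2 ≤ c.2) : t.2 < c.2 := by
  have hne : t.2 ≠ c.2 := fun h ↦ hc.1 (h ▸ hct)
  refine lt_of_le_of_ne (le_of_not_gt fun hcol : c.2 < t.2 ↦ ?_) hne
  have hca : ¬ M c.1 a.2 := fun h ↦ (hleft h).not_gt hcol
  -- Otherwise `(c.1, a.2)` is a guarded zero and crosses `t`.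
  have hrow : c.1 ≤ t.1 := le_of_not_gt fun h ↦
    hM (c.1, a.2) ⟨hca, ⟨t.1, h, hta⟩, t.2, hat, hct⟩ t ht hct hta
  have hd : (t.1, c.2) ∈ guardedZeros M := by
    have hz : ¬ M t.1 c.2 := hM c hc t ht hct
    obtain ⟨-, ⟨i, hi, hic⟩, -⟩ := hc
    obtain ⟨-, -, j, hj, htj⟩ := ht
    exact ⟨hz, ⟨i, hi.trans_le hrow, hic⟩, j, hcol.trans hj, htj⟩
  exact (hleft' hd).not_gt hcol

theorem CrossingFree.exists_forall_not_of_finite (hM : CrossingFree M (guardedZeros M))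
    {N : Set (α × β)} (hN : N ⊆ guardedZeros M) (hfin : N.Finite) (hne : N.Nonempty)
    (hrect : ∀ t ∈ N, ∀ c ∈ N, (t.1, c.2) ∈ guardedZeros M → (t.1, c.2) ∈ N) :
    ∃ a ∈ N, ∀ c ∈ N, ¬ M c.1 a.2 := by
  by_contra! hpred
  let Q : Set (α × β) := {a ∈ N | ∀ c ∈ N, M c.1 a.2 → a.2 < c.2}
  have hQ : Q.Nonempty := by
    obtain ⟨a, ha, hmin⟩ := Set.exists_min_image N Prod.snd hfin hne
    exact ⟨a, ha, fun c hc hca ↦ lt_of_le_of_ne (hmin c hc) fun h ↦ (hN hc).1 (h ▸ hca)⟩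
  obtain ⟨a, ⟨ha, hright⟩, hmax⟩ := Set.exists_max_image Q Prod.snd (hfin.sep _) hQ
  obtain ⟨t, ⟨ht, hta⟩, hleft⟩ :=
    Set.exists_min_image {t ∈ N | M t.1 a.2} Prod.snd (hfin.sep _) (hpred a ha)
  have hat : a.2 < t.2 := hright t ht hta
  have htQ : t ∈ Q := ⟨ht, fun c hc hct ↦
    hM.lt_snd_of_leftmost (hN ht) (hN hc) hta hct hat (fun hca ↦ hleft c ⟨hc, hca⟩)
      fun hd ↦ hleft (t.1, c.2) ⟨hrect t ht c hc hd, hta⟩⟩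
  exact (hmax t htQ).not_gt hat

theorem CrossingFree.not_transGen_altStep (hM : CrossingFree M (guardedZeros M)) (c : α × β) :
    ¬ Relation.TransGen (AltStep M (guardedZeros M)) c c := by
  intro hcycle
  obtain ⟨S, hfin, hc, hpred⟩ := exists_finite_forall_exists_rel_of_transGen hcycle
  rw [Set.insert_eq_of_mem hc] at hpred
  let N : Set (α × β) := guardedZeros M ∩ (Prod.fst '' S) ×ˢ (Prod.snd '' S)
  have hSN : ∀ y ∈ S, y ∈ guardedZeros M → y ∈ N := fun y hy hyM ↦ ⟨hyM, ⟨y, hy, rfl⟩, y, hy, rfl⟩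
  have hcN : c ∈ N := by
    obtain ⟨x, -, -, hcM, -⟩ := hpred c hc
    exact hSN c hc hcM
  obtain ⟨a, ⟨-, -, y, hy, hya⟩, hno⟩ := hM.exists_forall_not_of_finite (N := N)
    Set.inter_subset_left (((hfin.image _).prod (hfin.image _)).inter_of_right _) ⟨c, hcN⟩
    fun t ht c hc hd ↦ ⟨hd, ht.2.1, hc.2.2⟩
  obtain ⟨x, hx, hxM, -, hxy⟩ := hpred y hy
  exact hno x (hSN x hx hxM) (hya ▸ hxy)

variable {E F₁ F₂ F₃ : α → β → Prop}

theorem crossingFree_guardedZeros_of_eq_inf (hF₁ : Antitone (flip F₁)) (hF₂ : Monotone F₂)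
    (hF₃ : IsFerrers F₃) (hE : E = F₁ ⊓ F₂ ⊓ F₃) : CrossingFree E (guardedZeros E) := by
  subst hE
  refine hF₃.crossingFree inf_le_right ?_
  rintro ⟨p, q⟩ ⟨hz, ⟨i, hi, hiq⟩, j, hj, hpj⟩ h₃
  have h₁ : F₁ p q := hF₁ hj.le p hpj.1.1
  have h₂ : F₂ p q := hF₂ hi.le q hiq.1.2
  exact hz ⟨⟨h₁, h₂⟩, h₃⟩

theorem CrossingFree.exists_isFerrers_eq_inf (hE : CrossingFree E (guardedZeros E)) :
    ∃ F₁ F₂ F₃, IsFerrers F₁ ∧ IsFerrers F₂ ∧ IsFerrers F₃ ∧ E = F₁ ⊓ F₂ ⊓ F₃ := by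
  obtain ⟨F, hF, hEF, hzero⟩ := exists_isFerrers_of_acyclic hE.not_transGen_altStep
  let L : α → β → Prop := fun p q ↦ ∃ j ≥ q, E p j
  let D : α → β → Prop := fun p q ↦ ∃ i ≤ p, E i q
  have hL : Antitone (flip L) := fun _ _ hq _ ⟨j, hj, hpj⟩ ↦ ⟨j, hq.trans hj, hpj⟩
  have hD : Monotone D := fun _ _ hp _ ⟨i, hi, hiq⟩ ↦ ⟨i, hi.trans hp, hiq⟩
  refine ⟨L, D, F, (IsFerrers.of_antitone hL).flip, .of_monotone hD, hF, le_antisymm ?_ ?_⟩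
  · exact fun p q h ↦ ⟨⟨⟨q, le_rfl, h⟩, p, le_rfl, h⟩, hEF p q h⟩
  · rintro p q ⟨⟨⟨j, hj, hpj⟩, i, hi, hiq⟩, hpq⟩
    by_contra hz
    have hqj : q < j := lt_of_le_of_ne hj fun h ↦ hz (h ▸ hpj)
    have hip : i < p := lt_of_le_of_ne hi fun h ↦ hz (h ▸ hiq)
    exact hzero (p, q) ⟨hz, ⟨i, hip, hiq⟩, j, hqj, hpj⟩ hpq

end Patterns

theorem stmt_13_general (E : α → β → Prop) :
    (∃ F₁ F₂ F₃, IsFerrers F₁ ∧ IsFerrers F₂ ∧ IsFerrers F₃ ∧ E = F₁ ⊓ F₂ ⊓ F₃) ↔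
      ∃ (_ : LinearOrder α) (_ : LinearOrder β), ¬ HasGamma E ∧ ¬ HasDelta E := by
  constructor
  · rintro ⟨F₁, F₂, F₃, hF₁, hF₂, hF₃, hE⟩
    obtain ⟨_, hcols⟩ := exists_linearOrder_monotone (f := OrderDual.toDual ∘ flip F₁)
      fun b b' ↦ hF₁.flip b' b
    obtain ⟨_, hrows⟩ := exists_linearOrder_monotone hF₂
    exact ⟨_, _, crossingFree_guardedZeros_iff.1
      (crossingFree_guardedZeros_of_eq_inf hcols hrows hF₃ hE)⟩
  · rintro ⟨_, _, hE⟩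
    exact (crossingFree_guardedZeros_iff.2 hE).exists_isFerrers_eq_inf

section Finite

variable {m n : ℕ}

theorem exists_linearOrder_avoiding_iff_exists_equiv [Fintype α] [Fintype β]
    (hα : Fintype.card α = m) (hβ : Fintype.card β = n) (E : α → β → Prop) :
    (∃ (_ : LinearOrder α) (_ : LinearOrder β), ¬ HasGamma E ∧ ¬ HasDelta E) ↔
      ∃ (σ : Fin m ≃ α) (τ : Fin n ≃ β), ¬ HasGamma (fun i j ↦ E (σ i) (τ j)) ∧
        ¬ HasDelta (fun i j ↦ E (σ i) (τ j)) := by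
  constructor
  · rintro ⟨_, _, hΓ, hΔ⟩
    let σ := Fintype.orderIsoFinOfCardEq α hα
    let τ := Fintype.orderIsoFinOfCardEq β hβ
    exact ⟨σ, τ, fun h ↦ hΓ (h.of_comp_strictMono σ.strictMono τ.strictMono),
      fun h ↦ hΔ (h.of_comp_strictMono σ.strictMono τ.strictMono)⟩
  · rintro ⟨σ, τ, hΓ, hΔ⟩
    let _ := LinearOrder.lift' σ.symm σ.symm.injective
    let _ := LinearOrder.lift' τ.symm τ.symm.injective
    have hσ : StrictMono σ.symm := fun _ _ ↦ id
    have hτ : StrictMono τ.symm := fun _ _ ↦ id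
    have hE : E = fun a b ↦ E (σ (σ.symm a)) (τ (τ.symm b)) := by simp
    refine ⟨‹_›, ‹_›, fun h ↦ hΓ ?_, fun h ↦ hΔ ?_⟩ <;> rw [hE] at h
    · exact HasGamma.of_comp_strictMono hσ hτ h
    · exact HasDelta.of_comp_strictMono hσ hτ h

theorem containsGamma_iff_hasGamma (M : Fin m → Fin n → Bool) :
    ContainsGamma M ↔ HasGamma fun i j ↦ M i j = true := by
  simp only [ContainsGamma, HasGamma, Bool.not_eq_true]

theorem containsDelta_iff_hasDelta (M : Fin m → Fin n → Bool) :
    ContainsDelta M ↔ HasDelta fun i j ↦ M i j = true := by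
  simp only [ContainsDelta, HasDelta, Bool.not_eq_true]

theorem exists_chainGraph_iff_exists_isFerrers (E : Fin m → Fin n → Bool) :
    (∃ E₁ E₂ E₃ : Fin m → Fin n → Bool, ChainGraph E₁ ∧ ChainGraph E₂ ∧ ChainGraph E₃ ∧
      ∀ u v, E u v = (E₁ u v && E₂ u v && E₃ u v)) ↔
    ∃ F₁ F₂ F₃, IsFerrers F₁ ∧ IsFerrers F₂ ∧ IsFerrers F₃ ∧
      (fun u v ↦ E u v = true) = F₁ ⊓ F₂ ⊓ F₃ := by
  classical
  constructor
  · rintro ⟨E₁, E₂, E₃, h₁, h₂, h₃, hE⟩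
    refine ⟨fun u v ↦ E₁ u v, fun u v ↦ E₂ u v, fun u v ↦ E₃ u v, h₁, h₂, h₃, ?_⟩
    ext u v
    simp [hE]
  · rintro ⟨F₁, F₂, F₃, h₁, h₂, h₃, hE⟩
    have chain : ∀ F : Fin m → Fin n → Prop, IsFerrers F → ChainGraph fun u v ↦ decide (F u v) :=
      fun F hF ↦ by simpa only [ChainGraph, decide_eq_true_eq]
    refine ⟨_, _, _, chain F₁ h₁, chain F₂ h₂, chain F₃ h₃, fun u v ↦ ?_⟩
    exact Bool.eq_iff_iff.2 (by simpa using congrFun₂ hE u v)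

end Finite

theorem stmt_13 (m n : ℕ) (E : Fin m → Fin n → Bool) :
    (∃ E1 E2 E3 : Fin m → Fin n → Bool,
      ChainGraph E1 ∧ ChainGraph E2 ∧ ChainGraph E3 ∧
      ∀ u v, E u v = (E1 u v && E2 u v && E3 u v)) ↔
    (∃ (σ : Equiv.Perm (Fin m)) (τ : Equiv.Perm (Fin n)),
      ¬ ContainsGamma (fun i j => E (σ i) (τ j)) ∧
      ¬ ContainsDelta (fun i j => E (σ i) (τ j))) := by
  rw [exists_chainGraph_iff_exists_isFerrers, stmt_13_general,
    exists_linearOrder_avoiding_iff_exists_equiv (Fintype.card_fin m) (Fintype.card_fin n)]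
  simp only [containsGamma_iff_hasGamma, containsDelta_iff_hasDelta]
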